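/- For every τ ∈ ℍ and every z ∈ ℂ with z ∉ Λ_τ, the logarithmic τ-derivative of the Weierstrass sigma function satisfies ∂/∂τ log σ(z|τ) = (i/(4π))[℘(z|τ) − ζ(z|τ)² + 2η₁(τ)(zζ(z|τ) − 1) − (1/12)g₂(τ)z²]. -/

import Mathlib

open Complex Filter Topology Asymptotics

noncomputable section

/-- membership in the lattice `Λ_τ = ℤ + τℤ`. -/
def InLattice (τ z : ℂ) : Prop := ∃ m n : ℤ, z = (m : ℂ) + (n : ℂ) * τ

/-- the half-period generators `ω₀ = 0, ω₁ = 1, ω₂ = τ, ω₃ = 1 + τ`. -/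
def halfp (τ : ℂ) : Fin 4 → ℂ := ![0, 1, τ, 1 + τ]

/-- the Weierstrass elliptic function `℘(z|τ)`. -/
def wp (τ z : ℂ) : ℂ :=
  z⁻¹ ^ 2 + ∑' w : {w : ℤ × ℤ // w ≠ 0},
    ((z - ((w.1.1 : ℂ) + (w.1.2 : ℂ) * τ))⁻¹ ^ 2 - ((w.1.1 : ℂ) + (w.1.2 : ℂ) * τ)⁻¹ ^ 2)

/-- `℘′(z|τ)`, the `z`-derivative of `℘`. -/
def wpd (τ z : ℂ) : ℂ := deriv (wp τ) z

/-- `℘″(z|τ)`. -/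
def wpdd (τ z : ℂ) : ℂ := deriv (wpd τ) z

def e1 (τ : ℂ) : ℂ := wp τ (1 / 2)
def e2 (τ : ℂ) : ℂ := wp τ (τ / 2)
def e3 (τ : ℂ) : ℂ := wp τ ((1 + τ) / 2)

def g2 (τ : ℂ) : ℂ := -4 * (e1 τ * e2 τ + e1 τ * e3 τ + e2 τ * e3 τ)

/-- `zeta` is the Weierstrass zeta function: for each `τ ∈ ℍ`, `zeta τ` is odd, satisfies
`∂ζ/∂z = -℘` off the lattice, and `ζ(z|τ) - 1/z → 0` as `z → 0`. -/
def IsWeierstrassZeta (zeta : ℂ → ℂ → ℂ) : Prop :=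
  ∀ τ : ℂ, 0 < τ.im →
    (∀ z : ℂ, zeta τ (-z) = - zeta τ z) ∧
    (∀ z : ℂ, ¬ InLattice τ z → HasDerivAt (zeta τ) (- wp τ z) z) ∧
    Tendsto (fun z => zeta τ z - z⁻¹) (𝓝[≠] (0 : ℂ)) (𝓝 0)

/-- `eta1 τ = ζ(z+1|τ) - ζ(z|τ)` is the first quasi-period. -/
def IsEta1 (zeta : ℂ → ℂ → ℂ) (eta1 : ℂ → ℂ) : Prop :=
  ∀ τ : ℂ, 0 < τ.im → ∀ z : ℂ, ¬ InLattice τ z →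
    eta1 τ = zeta τ (z + 1) - zeta τ z

/-- `eta2 τ = ζ(z+τ|τ) - ζ(z|τ)` is the second quasi-period. -/
def IsEta2 (zeta : ℂ → ℂ → ℂ) (eta2 : ℂ → ℂ) : Prop :=
  ∀ τ : ℂ, 0 < τ.im → ∀ z : ℂ, ¬ InLattice τ z →
    eta2 τ = zeta τ (z + τ) - zeta τ z

/-- `sigma` is the Weierstrass sigma function: entire, odd, with
`∂/∂z log σ = ζ` off the lattice and `σ(z|τ)/z → 1` as `z → 0`. -/
def IsWeierstrassSigma (zeta sigma : ℂ → ℂ → ℂ) : Prop :=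
  ∀ τ : ℂ, 0 < τ.im →
    (∀ z : ℂ, sigma τ (-z) = - sigma τ z) ∧
    Differentiable ℂ (sigma τ) ∧
    (∀ z : ℂ, ¬ InLattice τ z → HasDerivAt (sigma τ) (zeta τ z * sigma τ z) z) ∧
    Tendsto (fun z => sigma τ z / z) (𝓝[≠] (0 : ℂ)) (𝓝 1)

/-- the Hamiltonian system (142) for `(p(τ), A(τ))` on `V`. -/
def HamSystem (n : Fin 4 → ℂ) (zeta : ℂ → ℂ → ℂ) (eta1 : ℂ → ℂ)
    (V : Set ℂ) (p A : ℂ → ℂ) : Prop :=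
  ∀ τ ∈ V,
    HasDerivAt p ((-Complex.I / (4 * (Real.pi : ℂ))) *
      (2 * A τ - zeta τ (2 * p τ) + 2 * p τ * eta1 τ)) τ ∧
    HasDerivAt A ((Complex.I / (4 * (Real.pi : ℂ))) *
      ((2 * wp τ (2 * p τ) + 2 * eta1 τ) * A τ - (3 / 2) * wpd τ (2 * p τ)
        - ∑ k : Fin 4, n k * (n k + 1) * wpd τ (p τ + halfp τ k / 2))) τ

/-- the generalized Lamé potential `I(z;τ)`. -/
def Ipot (n : Fin 4 → ℂ) (zeta : ℂ → ℂ → ℂ) (A B p τ z : ℂ) : ℂ :=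
  (∑ k : Fin 4, n k * (n k + 1) * wp τ (z + halfp τ k / 2))
    + (3 / 4) * (wp τ (z + p) + wp τ (z - p))
    + A * (zeta τ (z + p) - zeta τ (z - p)) + B

end

/-!
Write `θ` for the odd Jacobi theta function and a prime for `∂/∂z`. The quotient
`θ(z) exp(η₁ z² / 2) / σ(z)` is entire and transforms under `ℤ + τℤ` in such a way that Liouville's
theorem makes it constant, so that `σ(z) = θ(z) exp(η₁ z² / 2) / θ'(0)`. The heat equation
`4πi ∂θ/∂τ = θ''` turns the `τ`-derivative of the right-hand side into `z`-derivatives of `θ` at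
`z` and at `0`. Those at `z` are given by `(log θ)' = ζ - η₁ z` and `(log θ)'' = -℘ - η₁`, and the
Taylor expansion of the second identity at `0` yields `θ⁽³⁾(0) = -3 η₁ θ'(0)` and
`θ⁽⁵⁾(0) = (15 η₁² - g₂ / 2) θ'(0)`.

The formula `g₂ = -4 (e₁e₂ + e₁e₃ + e₂e₃)` follows from the cubic differential equation of `℘` once
the `eᵢ` are known to be distinct, which is read off
`σ(z + w) σ(z - w) = σ(z)² σ(w)² (℘(w) - ℘(z))`.
-/

open scoped Real

section ComplexAnalysis

lemma eventuallyEq_zero_of_deriv_eventuallyEq_mul {𝕜 : Type*} [NontriviallyNormedField 𝕜]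
    [CompleteSpace 𝕜] [CharZero 𝕜] {f p : 𝕜 → 𝕜} {z₀ : 𝕜}
    (hf : AnalyticAt 𝕜 f z₀) (hp : AnalyticAt 𝕜 p z₀) (hfp : deriv f =ᶠ[𝓝 z₀] p * f)
    (h₀ : f z₀ = 0) : f =ᶠ[𝓝 z₀] 0 := by
  have horder : analyticOrderAt p z₀ + analyticOrderAt f z₀ + 1 = analyticOrderAt f z₀ := by
    rw [← analyticOrderAt_mul hp hf, ← analyticOrderAt_congr hfp, hf.analyticOrderAt_deriv_add_one]
    simp only [h₀, sub_zero]
  have hle : analyticOrderAt f z₀ + 1 ≤ analyticOrderAt f z₀ := by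
    conv_rhs => rw [← horder, add_assoc]
    exact le_add_self
  exact analyticOrderAt_eq_top.mp <| by_contra fun hne =>
    ((ENat.lt_add_one_iff hne).mpr le_rfl).not_ge hle

lemma analyticOrderAt_le_of_deriv_ne_zero {f g : ℂ → ℂ} {z : ℂ} (hf : AnalyticAt ℂ f z)
    (hg : AnalyticAt ℂ g z) (hsimple : f z = 0 → deriv f z ≠ 0) (hzero : f z = 0 → g z = 0) :
    analyticOrderAt f z ≤ analyticOrderAt g z := by
  by_cases hz : f z = 0
  · rw [hf.analyticOrderAt_eq_one_of_zero_deriv_ne_zero hz (hsimple hz),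
      Order.one_le_iff_ne_zero, hg.analyticOrderAt_ne_zero]
    exact hzero hz
  · rw [hf.analyticOrderAt_eq_zero.mpr hz]
    exact zero_le

lemma meromorphicOrderAt_div_nonneg {f g : ℂ → ℂ} {z : ℂ} (hf : AnalyticAt ℂ f z)
    (hg : AnalyticAt ℂ g z) (htop : analyticOrderAt f z ≠ ⊤)
    (hle : analyticOrderAt f z ≤ analyticOrderAt g z) : 0 ≤ meromorphicOrderAt (g / f) z := by
  rw [meromorphicOrderAt_div hg.meromorphicAt hf.meromorphicAt, hg.meromorphicOrderAt_eq,
    hf.meromorphicOrderAt_eq]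
  generalize analyticOrderAt f z = m at *
  lift m to ℕ using htop
  generalize analyticOrderAt g z = n at *
  cases n with
  | top => exact le_top
  | coe n => exact WithTop.coe_le_coe.mpr (sub_nonneg.mpr (by exact_mod_cast hle))

lemma exists_differentiable_eq_mul {g s : ℂ → ℂ} (hg : Differentiable ℂ g)
    (hs : Differentiable ℂ s) (hs₀ : ∃ z, s z ≠ 0)
    (hle : ∀ z, analyticOrderAt s z ≤ analyticOrderAt g z) :
    ∃ f : ℂ → ℂ, Differentiable ℂ f ∧ ∀ z, g z = f z * s z := by
  have hgs : MeromorphicOn (g / s) Set.univ := fun z _ =>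
    (hg.analyticAt z).meromorphicAt.div (hs.analyticAt z).meromorphicAt
  obtain ⟨z₀, hz₀⟩ := hs₀
  have htop (z : ℂ) : analyticOrderAt s z ≠ ⊤ :=
    AnalyticOnNhd.analyticOrderAt_ne_top_of_isPreconnected (fun z _ => hs.analyticAt z)
      isPreconnected_univ (Set.mem_univ z₀) (Set.mem_univ z)
      (by simp [(hs.analyticAt z₀).analyticOrderAt_eq_zero.mpr hz₀])
  set f := toMeromorphicNFOn (g / s) Set.univ
  have hf : Differentiable ℂ f := fun z => by
    have horder : 0 ≤ meromorphicOrderAt f z := by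
      rw [meromorphicOrderAt_toMeromorphicNFOn hgs (Set.mem_univ z)]
      exact meromorphicOrderAt_div_nonneg (hs.analyticAt z) (hg.analyticAt z) (htop z) (hle z)
    exact ((meromorphicNFOn_toMeromorphicNFOn (g / s) Set.univ
      (Set.mem_univ z)).meromorphicOrderAt_nonneg_iff_analyticAt.mp horder).differentiableAt
  have hfreq : ∀ᶠ z in 𝓝[≠] z₀, g z = (f * s) z := by
    filter_upwards [hgs.toMeromorphicNFOn_eq_self_on_nhdsNE (Set.mem_univ z₀),
      nhdsWithin_le_nhds ((hs z₀).continuousAt.eventually_ne hz₀)] with z hfz hsz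
    rw [Pi.mul_apply, show f z = (g / s) z from hfz, Pi.div_apply, div_mul_cancel₀ _ hsz]
  exact ⟨f, hf, congrFun (AnalyticOnNhd.eq_of_frequently_eq (fun z _ => hg.analyticAt z)
    (fun z _ => (hf.mul hs).analyticAt z) hfreq.frequently)⟩

lemma eq_of_mul_eq_mul_of_differentiable {f g s : ℂ → ℂ} (hf : Differentiable ℂ f)
    (hg : Differentiable ℂ g) (hs : Differentiable ℂ s) (hs₀ : ∃ z, s z ≠ 0)
    (h : ∀ z, f z * s z = g z * s z) : f = g := by
  obtain ⟨z₀, hz₀⟩ := hs₀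
  have hzero := AnalyticOnNhd.eq_zero_or_eq_zero_of_mul_eq_zero
    (fun z _ => (hf.sub hg).analyticAt z) (fun z _ => hs.analyticAt z)
    (fun z _ => by rw [Pi.sub_apply, sub_mul, h z, sub_self]) isPreconnected_univ
  exact funext fun z => sub_eq_zero.mp <|
    hzero.resolve_right (fun hs => hz₀ (hs z₀ trivial)) z trivial

end ComplexAnalysis

section HirotaForm

/-- The form `f'² - f f'' = -f² (log f)''`, which is `-½ D²(f·f)` for Hirota's bilinear
operator `D`. -/
noncomputable def hirotaForm (f : ℂ → ℂ) (z : ℂ) : ℂ := deriv f z ^ 2 - f z * deriv (deriv f) z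

lemma differentiable_hirotaForm {f : ℂ → ℂ} (hf : Differentiable ℂ f) :
    Differentiable ℂ (hirotaForm f) := by
  have hf' : Differentiable ℂ (deriv f) := fun z => (hf.analyticAt z).deriv.differentiableAt
  have hf'' : Differentiable ℂ (deriv (deriv f)) := fun z =>
    (hf.analyticAt z).deriv.deriv.differentiableAt
  exact (hf'.pow 2).sub (hf.mul hf'')

lemma hirotaForm_eq_mul_self_sub (f : ℂ → ℂ) :
    hirotaForm f = fun z => deriv f z * deriv f z - f z * deriv (deriv f) z :=
  funext fun z => by rw [hirotaForm, pow_two]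

variable {u q : ℂ → ℂ}

attribute [local fun_prop] AnalyticAt.contDiffAt AnalyticAt.deriv

lemma iteratedDeriv_sq_mul_zero (hu : AnalyticAt ℂ u 0) (n : ℕ) :
    iteratedDeriv (n + 2) (fun z => z ^ 2 * u z) 0 = (n + 2) * (n + 1) * iteratedDeriv n u 0 := by
  rw [iteratedDeriv_fun_mul (by fun_prop) (by fun_prop), Finset.sum_eq_single 2]
  · rw [iteratedDeriv_fun_pow_zero, if_pos rfl, Nat.cast_choose_two, Nat.add_sub_cancel]
    push_cast
    ring
  · intro i _ hi
    rw [iteratedDeriv_fun_pow_zero, if_neg hi, Nat.cast_zero, mul_zero, zero_mul]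
  · intro h
    exact absurd (Finset.mem_range.mpr (by lia)) h

lemma iteratedDeriv_of_sq_mul_hirotaForm_eventuallyEq (hu : AnalyticAt ℂ u 0)
    (hq : AnalyticAt ℂ q 0)
    (hrel : (fun z => z ^ 2 * hirotaForm u z) =ᶠ[𝓝 0] fun z => (1 + z ^ 2 * q z) * u z ^ 2)
    (n : ℕ) :
    (n + 2) * (n + 1) * (iteratedDeriv n (hirotaForm u) 0
      - iteratedDeriv n (fun z => q z * (u z * u z)) 0)
      = iteratedDeriv (n + 2) (fun z => u z * u z) 0 := by
  have hH : AnalyticAt ℂ (hirotaForm u) 0 := (hu.deriv.pow 2).sub (hu.mul hu.deriv.deriv)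
  have heq : (fun z => u z * u z) =ᶠ[𝓝 0]
      fun z => z ^ 2 * (hirotaForm u z - q z * (u z * u z)) :=
    hrel.mono fun z hz => by linear_combination -hz
  rw [heq.iteratedDeriv_eq, iteratedDeriv_sq_mul_zero (by fun_prop),
    iteratedDeriv_fun_sub (by fun_prop) (by fun_prop)]

variable (hu : AnalyticAt ℂ u 0) (heven : ∀ k, Even k → iteratedDeriv k u 0 = 0)
include hu heven

lemma iteratedDeriv_two_hirotaForm_zero : iteratedDeriv 2 (hirotaForm u) 0 = 0 := by
  simp (discharger := fun_prop) [hirotaForm_eq_mul_self_sub,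
    iteratedDeriv_fun_sub, iteratedDeriv_fun_mul, ← iteratedDeriv_succ', Finset.sum_range_succ,
    heven 0 Even.zero, heven 2 even_two, heven 4 (by decide), -iteratedDeriv_one]
  ring

lemma iteratedDeriv_four_hirotaForm_zero :
    iteratedDeriv 4 (hirotaForm u) 0
      = 2 * iteratedDeriv 3 u 0 ^ 2 - 2 * iteratedDeriv 1 u 0 * iteratedDeriv 5 u 0 := by
  simp (discharger := fun_prop) [hirotaForm_eq_mul_self_sub,
    iteratedDeriv_fun_sub, iteratedDeriv_fun_mul, ← iteratedDeriv_succ', Finset.sum_range_succ,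
    heven 0 Even.zero, heven 2 even_two, heven 4 (by decide), heven 6 (by decide), Nat.choose,
    -iteratedDeriv_one]
  ring

lemma iteratedDeriv_four_mul_self_zero :
    iteratedDeriv 4 (fun z => u z * u z) 0 = 8 * iteratedDeriv 1 u 0 * iteratedDeriv 3 u 0 := by
  simp (discharger := fun_prop) [iteratedDeriv_fun_mul, Finset.sum_range_succ, heven 0 Even.zero,
    heven 2 even_two, heven 4 (by decide), -iteratedDeriv_one]
  ring

lemma iteratedDeriv_six_mul_self_zero :
    iteratedDeriv 6 (fun z => u z * u z) 0
      = 12 * iteratedDeriv 1 u 0 * iteratedDeriv 5 u 0 + 20 * iteratedDeriv 3 u 0 ^ 2 := by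
  simp (discharger := fun_prop) [iteratedDeriv_fun_mul, Finset.sum_range_succ, heven 0 Even.zero,
    heven 2 even_two, heven 4 (by decide), heven 6 (by decide), Nat.choose,
    -iteratedDeriv_one]
  ring

variable (hq : AnalyticAt ℂ q 0) (hu₁ : iteratedDeriv 1 u 0 ≠ 0)
  (hrel : (fun z => z ^ 2 * hirotaForm u z) =ᶠ[𝓝 0] fun z => (1 + z ^ 2 * q z) * u z ^ 2)
include hq hu₁ hrel

lemma iteratedDeriv_three_of_sq_mul_hirotaForm_eventuallyEq :
    iteratedDeriv 3 u 0 = -3 * q 0 * iteratedDeriv 1 u 0 := by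
  have hmul : iteratedDeriv 2 (fun z => q z * (u z * u z)) 0
      = 2 * q 0 * iteratedDeriv 1 u 0 ^ 2 := by
    simp (discharger := fun_prop) [iteratedDeriv_fun_mul, Finset.sum_range_succ, heven 0 Even.zero,
      heven 2 even_two, -iteratedDeriv_one]
    ring
  have horder := iteratedDeriv_of_sq_mul_hirotaForm_eventuallyEq hu hq hrel 2
  rw [iteratedDeriv_two_hirotaForm_zero hu heven, hmul,
    iteratedDeriv_four_mul_self_zero hu heven] at horder
  refine mul_left_cancel₀ hu₁ ?_
  linear_combination -horder / 8

lemma iteratedDeriv_five_of_sq_mul_hirotaForm_eventuallyEq :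
    iteratedDeriv 5 u 0 = (15 * q 0 ^ 2 - 5 * iteratedDeriv 2 q 0) * iteratedDeriv 1 u 0 := by
  have hmul : iteratedDeriv 4 (fun z => q z * (u z * u z)) 0
      = 8 * q 0 * iteratedDeriv 1 u 0 * iteratedDeriv 3 u 0
        + 12 * iteratedDeriv 2 q 0 * iteratedDeriv 1 u 0 ^ 2 := by
    simp (discharger := fun_prop) [iteratedDeriv_fun_mul, Finset.sum_range_succ, heven 0 Even.zero,
      heven 2 even_two, heven 4 (by decide), Nat.choose, -iteratedDeriv_one]
    ring
  have horder := iteratedDeriv_of_sq_mul_hirotaForm_eventuallyEq hu hq hrel 4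
  rw [iteratedDeriv_four_hirotaForm_zero hu heven, hmul,
    iteratedDeriv_six_mul_self_zero hu heven,
    iteratedDeriv_three_of_sq_mul_hirotaForm_eventuallyEq hu heven hq hu₁ hrel] at horder
  refine mul_left_cancel₀ hu₁ ?_
  linear_combination -horder / 72

end HirotaForm

section PeriodLattice

variable (L : PeriodPair)

lemma countable_lattice : (L.lattice : Set ℂ).Countable :=
  Set.countable_coe_iff.mp (L.latticeEquivProd.toEquiv.countable_iff.mpr inferInstance)

lemma isOpen_compl_lattice : IsOpen (L.lattice : Set ℂ)ᶜ :=
  L.isClosed_lattice.isOpen_compl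

lemma isPreconnected_compl_lattice : IsPreconnected (L.lattice : Set ℂ)ᶜ :=
  ((countable_lattice L).isConnected_compl_of_one_lt_rank (by simp)).isPreconnected

variable {L}

lemma add_notMem_lattice {z l : ℂ} (hz : z ∉ L.lattice) (hl : l ∈ L.lattice) :
    z + l ∉ L.lattice :=
  (add_mem_cancel_right hl).not.mpr hz

lemma eq_of_eqOn_compl_lattice {f g : ℂ → ℂ} (hf : Continuous f) (hg : Continuous g)
    (h : ∀ z ∉ L.lattice, f z = g z) : f = g :=
  hf.ext_on ((countable_lattice L).dense_compl ℝ) hg h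

lemma eq_of_hasDerivAt_zero_on_compl_lattice {f : ℂ → ℂ}
    (h : ∀ z ∉ L.lattice, HasDerivAt f 0 z) {z w : ℂ} (hz : z ∉ L.lattice)
    (hw : w ∉ L.lattice) : f z = f w :=
  (isOpen_compl_lattice L).is_const_of_deriv_eq_zero (isPreconnected_compl_lattice L)
    (fun x hx => (h x hx).differentiableAt.differentiableWithinAt)
    (fun x hx => (h x hx).deriv) hz hw

lemma apply_eq_apply_of_norm_le_periodic {f : ℂ → ℂ} (hf : Differentiable ℂ f) {φ : ℂ → ℝ}
    (hφ : Continuous φ) (hφ₁ : Function.Periodic φ L.ω₁) (hφ₂ : Function.Periodic φ L.ω₂)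
    (hle : ∀ z, ‖f z‖ ≤ φ z) (z w : ℂ) : f z = f w := by
  have hper (z l : ℂ) (hl : l ∈ L.lattice) : φ (z + l) = φ z := by
    obtain ⟨m, n, rfl⟩ := PeriodPair.mem_lattice.mp hl
    rw [← add_assoc, hφ₂.int_mul n, hφ₁.int_mul m]
  obtain ⟨M, hM⟩ := (IsZLattice.isCompact_range_of_periodic L.lattice φ hφ hper).bddAbove
  refine hf.apply_eq_apply_of_bounded (isBounded_iff_forall_norm_le.mpr ⟨M, ?_⟩) z w
  exact Set.forall_mem_range.mpr fun x => (hle x).trans (hM ⟨x, rfl⟩)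

lemma exists_eq_const_mul_of_quasiperiodic {g s : ℂ → ℂ} (hg : Differentiable ℂ g)
    (hs : Differentiable ℂ s) (hs₀ : ∃ z, s z ≠ 0)
    (hle : ∀ z, analyticOrderAt s z ≤ analyticOrderAt g z)
    (hquasi : ∀ l ∈ L.lattice, ∃ m : ℂ → ℂ,
      ∀ z, m z ≠ 0 ∧ g (z + l) = m z * g z ∧ s (z + l) = m z * s z) :
    ∃ c, ∀ z, g z = c * s z := by
  obtain ⟨f, hf, hgf⟩ := exists_differentiable_eq_mul hg hs hs₀ hle
  have hper (l : ℂ) (hl : l ∈ L.lattice) : Function.Periodic f l := by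
    obtain ⟨m, hm⟩ := hquasi l hl
    refine congrFun (eq_of_mul_eq_mul_of_differentiable (by fun_prop) hf hs hs₀ fun z => ?_)
    obtain ⟨hm₀, hgz, hsz⟩ := hm z
    rw [hgf, hgf z, hsz] at hgz
    exact mul_left_cancel₀ hm₀ (by linear_combination hgz)
  refine ⟨f 0, fun z => ?_⟩
  rw [hgf, apply_eq_apply_of_norm_le_periodic hf hf.continuous.norm
    (fun z => by rw [hper _ L.ω₁_mem_lattice]) (fun z => by rw [hper _ L.ω₂_mem_lattice])
    (fun _ => le_rfl) z 0]

lemma iteratedDeriv_two_weierstrassPExcept_zero (L : PeriodPair) :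
    iteratedDeriv 2 (L.weierstrassPExcept 0) 0 = L.g₂ / 10 := by
  simp [PeriodPair.iteratedDeriv_weierstrassPExcept_self, PeriodPair.g₂]
  ring

end PeriodLattice

/-- `ζ` and `σ` are the Weierstrass zeta and sigma functions of the lattice of `L`. The values of
`ζ` on the lattice are junk; elsewhere its normalisation follows from that of `σ`. -/
structure IsSigmaPair (L : PeriodPair) (ζ σ : ℂ → ℂ) : Prop where
  hasDerivAt_zeta : ∀ z ∉ L.lattice, HasDerivAt ζ (-L.weierstrassP z) z
  odd : σ.Odd
  differentiable : Differentiable ℂ σ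
  hasDerivAt : ∀ z ∉ L.lattice, HasDerivAt σ (ζ z * σ z) z
  tendsto : Tendsto (fun z => σ z / z) (𝓝[≠] (0 : ℂ)) (𝓝 1)

namespace IsSigmaPair

variable {L : PeriodPair} {ζ σ : ℂ → ℂ} (h : IsSigmaPair L ζ σ)
include h

lemma sigma_zero : σ 0 = 0 :=
  h.odd.map_zero

lemma hasDerivAt_zero : HasDerivAt σ 1 0 := by
  rw [hasDerivAt_iff_tendsto_slope]
  refine h.tendsto.congr fun z => ?_
  rw [slope_def_field, h.sigma_zero, sub_zero, sub_zero]

lemma deriv_eventuallyEq {z : ℂ} (hz : z ∉ L.lattice) : deriv σ =ᶠ[𝓝 z] ζ * σ := by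
  filter_upwards [(isOpen_compl_lattice L).mem_nhds hz] with w hw
  exact (h.hasDerivAt w hw).deriv

lemma analyticAt_zeta {z : ℂ} (hz : z ∉ L.lattice) : AnalyticAt ℂ ζ z :=
  DifferentiableOn.analyticAt
    (fun w hw => (h.hasDerivAt_zeta w hw).differentiableAt.differentiableWithinAt)
    ((isOpen_compl_lattice L).mem_nhds hz)

lemma sigma_ne_zero {z : ℂ} (hz : z ∉ L.lattice) : σ z ≠ 0 := fun hσz => by
  have hσ : σ = 0 := AnalyticOnNhd.eq_of_eventuallyEq (fun w _ => h.differentiable.analyticAt w)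
    (fun w _ => analyticAt_const) (eventuallyEq_zero_of_deriv_eventuallyEq_mul
      (h.differentiable.analyticAt z) (h.analyticAt_zeta hz) (h.deriv_eventuallyEq hz) hσz)
  have hderiv := h.hasDerivAt_zero
  rw [hσ] at hderiv
  exact one_ne_zero (hderiv.unique (hasDerivAt_const 0 0))

lemma exists_zeta_add {l : ℂ} (hl : l ∈ L.lattice) :
    ∃ η : ℂ, ∀ z ∉ L.lattice, ζ (z + l) = ζ z + η := by
  refine ⟨ζ (L.ω₁ / 2 + l) - ζ (L.ω₁ / 2), fun z hz => ?_⟩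
  have hderiv : ∀ z ∉ L.lattice, HasDerivAt (fun z => ζ (z + l) - ζ z) 0 z := fun z hz => by
    convert! ((h.hasDerivAt_zeta _ (add_notMem_lattice hz hl)).comp_add_const z l).sub
      (h.hasDerivAt_zeta z hz) using 1
    rw [L.weierstrassP_add_coe z ⟨l, hl⟩, sub_self]
  linear_combination
    eq_of_hasDerivAt_zero_on_compl_lattice hderiv hz L.ω₁_div_two_notMem_lattice

lemma exists_sigma_add {l η : ℂ} (hl : l ∈ L.lattice)
    (hη : ∀ z ∉ L.lattice, ζ (z + l) = ζ z + η) :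
    ∃ C : ℂ, C ≠ 0 ∧ ∀ z, σ (z + l) = C * cexp (η * z) * σ z := by
  have hσ := h.differentiable.continuous
  have hw := L.ω₁_div_two_notMem_lattice
  have hderiv : ∀ z ∉ L.lattice,
      HasDerivAt (fun z => σ (z + l) * cexp (-(η * z)) / σ z) 0 z := fun z hz => by
    have hshift := (h.hasDerivAt _ (add_notMem_lattice hz hl)).comp_add_const z l
    have hexp := ((hasDerivAt_id z).const_mul η).neg.cexp
    convert! (hshift.mul hexp).div (h.hasDerivAt z hz) (h.sigma_ne_zero hz) using 1
    simp only [hη z hz, Pi.mul_apply, Pi.neg_apply, id]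
    ring
  refine ⟨σ (L.ω₁ / 2 + l) * cexp (-(η * (L.ω₁ / 2))) / σ (L.ω₁ / 2),
    div_ne_zero (mul_ne_zero (h.sigma_ne_zero (add_notMem_lattice hw hl)) (exp_ne_zero _))
      (h.sigma_ne_zero hw),
    congrFun (eq_of_eqOn_compl_lattice (L := L) (by fun_prop) (by fun_prop) fun z hz => ?_)⟩
  rw [← eq_of_hasDerivAt_zero_on_compl_lattice hderiv hz hw, exp_neg]
  have := h.sigma_ne_zero hz
  field_simp

lemma sigma_add {l η : ℂ} (hl : l ∈ L.lattice) (hl₂ : l / 2 ∉ L.lattice)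
    (hη : ∀ z ∉ L.lattice, ζ (z + l) = ζ z + η) (z : ℂ) :
    σ (z + l) = -cexp (η * (z + l / 2)) * σ z := by
  obtain ⟨C, -, hC⟩ := h.exists_sigma_add hl hη
  have hC_inv : C * cexp (η * -(l / 2)) = -1 := by
    have hhalf := hC (-(l / 2))
    rw [neg_add_eq_sub, sub_half, h.odd] at hhalf
    exact mul_right_cancel₀ (h.sigma_ne_zero hl₂) (by linear_combination hhalf)
  rw [hC, show η * z = η * -(l / 2) + η * (z + l / 2) by ring, exp_add]
  linear_combination cexp (η * (z + l / 2)) * σ z * hC_inv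

lemma sigma_eq_zero_iff {z : ℂ} : σ z = 0 ↔ z ∈ L.lattice := by
  refine ⟨fun hz => by_contra fun hzL => h.sigma_ne_zero hzL hz, fun hz => ?_⟩
  obtain ⟨η, hη⟩ := h.exists_zeta_add hz
  obtain ⟨C, -, hC⟩ := h.exists_sigma_add hz hη
  rw [← zero_add z, hC, h.sigma_zero, mul_zero]

lemma exists_ne_zero : ∃ z, σ z ≠ 0 :=
  ⟨_, h.sigma_ne_zero L.ω₁_div_two_notMem_lattice⟩

lemma deriv_ne_zero {z : ℂ} (hz : σ z = 0) : deriv σ z ≠ 0 := by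
  have hzL := h.sigma_eq_zero_iff.mp hz
  obtain ⟨η, hη⟩ := h.exists_zeta_add hzL
  obtain ⟨C, hC₀, hC⟩ := h.exists_sigma_add hzL hη
  have hderiv : HasDerivAt (fun w => C * cexp (η * w) * σ w) C 0 := by
    have hexp : HasDerivAt (fun w => C * cexp (η * w)) (C * (cexp (η * 0) * (η * 1))) 0 :=
      ((hasDerivAt_id _).const_mul η).cexp.const_mul C
    convert! hexp.mul h.hasDerivAt_zero using 1
    rw [h.sigma_zero, mul_zero, mul_zero, exp_zero]
    ring
  rw [← funext hC] at hderiv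
  rw [← zero_add z, ← deriv_comp_add_const, hderiv.deriv]
  exact hC₀

lemma deriv_deriv {z : ℂ} (hz : z ∉ L.lattice) :
    deriv (deriv σ) z = (ζ z ^ 2 - L.weierstrassP z) * σ z := by
  rw [(h.deriv_eventuallyEq hz).deriv_eq,
    ((h.hasDerivAt_zeta z hz).mul (h.hasDerivAt z hz)).deriv]
  ring

lemma hirotaForm_eq {z : ℂ} (hz : z ∉ L.lattice) :
    hirotaForm σ z = L.weierstrassP z * σ z ^ 2 := by
  rw [hirotaForm, h.deriv_deriv hz, (h.hasDerivAt z hz).deriv]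
  ring

lemma hirotaForm_zero : hirotaForm σ 0 = 1 := by
  rw [hirotaForm, h.hasDerivAt_zero.deriv, h.sigma_zero, zero_mul, sub_zero, one_pow]

lemma hirotaForm_add {l : ℂ} (hl : l ∈ L.lattice) {m : ℂ → ℂ} (hm : Continuous m)
    (hσ : ∀ z, σ (z + l) = m z * σ z) (z : ℂ) :
    hirotaForm σ (z + l) = m z ^ 2 * hirotaForm σ z := by
  have hcont := (differentiable_hirotaForm h.differentiable).continuous
  refine congrFun (eq_of_eqOn_compl_lattice (L := L) (f := fun z => hirotaForm σ (z + l))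
    (g := fun z => m z ^ 2 * hirotaForm σ z) (by fun_prop) (by fun_prop) fun z hz => ?_) z
  rw [h.hirotaForm_eq hz, h.hirotaForm_eq (add_notMem_lattice hz hl), hσ,
    L.weierstrassP_add_coe z ⟨l, hl⟩]
  ring

lemma deriv_sigma_mul_sigma_ne_zero {w z : ℂ} (hw : 2 * w ∉ L.lattice)
    (hz : σ (z + w) * σ (z - w) = 0) : deriv (fun z => σ (z + w) * σ (z - w)) z ≠ 0 := by
  have hσ := h.differentiable
  have hderiv : deriv (fun z => σ (z + w) * σ (z - w)) z
      = deriv σ (z + w) * σ (z - w) + σ (z + w) * deriv σ (z - w) := by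
    rw [deriv_fun_mul (by fun_prop) (by fun_prop), deriv_comp_add_const, deriv_comp_sub_const]
  have hdisjoint (hadd : σ (z + w) = 0) (hsub : σ (z - w) = 0) : False :=
    hw <| by
      rw [show 2 * w = z + w - (z - w) by ring]
      exact sub_mem (h.sigma_eq_zero_iff.mp hadd) (h.sigma_eq_zero_iff.mp hsub)
  rw [hderiv]
  rcases mul_eq_zero.mp hz with hadd | hsub
  · rw [hadd, zero_mul, add_zero]
    exact mul_ne_zero (h.deriv_ne_zero hadd) (hdisjoint hadd)
  · rw [hsub, mul_zero, zero_add]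
    exact mul_ne_zero (fun hadd => hdisjoint hadd hsub) (h.deriv_ne_zero hsub)

lemma hirotaForm_mul_sq_eq_of_add_mem_or_sub_mem {z w : ℂ} (hw : w ∉ L.lattice)
    (hzw : z + w ∈ L.lattice ∨ z - w ∈ L.lattice) :
    hirotaForm σ z * σ w ^ 2 - σ z ^ 2 * hirotaForm σ w = 0 := by
  obtain ⟨hz, hP⟩ : z ∉ L.lattice ∧ L.weierstrassP z = L.weierstrassP w := by
    rcases hzw with hadd | hsub
    · refine ⟨fun hz => hw ((add_mem_cancel_left hz).mp hadd), ?_⟩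
      rw [show z = -w + (z + w) by ring, L.weierstrassP_add_coe (-w) ⟨z + w, hadd⟩,
        L.weierstrassP_neg]
    · refine ⟨fun hz => hw (by simpa using sub_mem hz hsub), ?_⟩
      rw [show z = w + (z - w) by ring, L.weierstrassP_add_coe w ⟨z - w, hsub⟩]
  rw [h.hirotaForm_eq hz, h.hirotaForm_eq hw, hP]
  ring

lemma sigma_add_mul_sigma_sub_of_two_mul_notMem {w : ℂ} (hw : 2 * w ∉ L.lattice) (z : ℂ) :
    σ (z + w) * σ (z - w) = σ z ^ 2 * hirotaForm σ w - hirotaForm σ z * σ w ^ 2 := by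
  have hσ := h.differentiable
  have hA : Differentiable ℂ fun z => hirotaForm σ z * σ w ^ 2 - σ z ^ 2 * hirotaForm σ w := by
    have := differentiable_hirotaForm hσ
    fun_prop
  have hS : Differentiable ℂ fun z => σ (z + w) * σ (z - w) := by fun_prop
  have hwL : w ∉ L.lattice := fun hwL => hw (by rw [two_mul]; exact add_mem hwL hwL)
  have hσw := h.sigma_ne_zero hwL
  have hS_zero : σ (0 + w) * σ (0 - w) = -σ w ^ 2 := by
    rw [zero_add, zero_sub, h.odd]
    ring
  obtain ⟨c, hc⟩ := exists_eq_const_mul_of_quasiperiodic (L := L) hA hS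
    ⟨0, by rw [hS_zero]; exact neg_ne_zero.mpr (pow_ne_zero 2 hσw)⟩
    (fun z => analyticOrderAt_le_of_deriv_ne_zero (hS.analyticAt z) (hA.analyticAt z)
      (h.deriv_sigma_mul_sigma_ne_zero hw) fun hz =>
        h.hirotaForm_mul_sq_eq_of_add_mem_or_sub_mem hwL
          ((mul_eq_zero.mp hz).imp h.sigma_eq_zero_iff.mp h.sigma_eq_zero_iff.mp))
    fun l hl => by
      obtain ⟨η, hη⟩ := h.exists_zeta_add hl
      obtain ⟨C, hC₀, hC⟩ := h.exists_sigma_add hl hη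
      refine ⟨fun z => (C * cexp (η * z)) ^ 2, fun z =>
        ⟨pow_ne_zero 2 (mul_ne_zero hC₀ (exp_ne_zero _)), ?_, ?_⟩⟩
      · rw [h.hirotaForm_add hl (by fun_prop) hC, hC]
        ring
      · rw [add_right_comm, add_sub_right_comm, hC, hC, mul_add, mul_sub, exp_add, exp_sub]
        field_simp
  have hc_eq : c = -1 := by
    have h₀ := hc 0
    rw [hS_zero, h.hirotaForm_zero, h.sigma_zero] at h₀
    exact mul_right_cancel₀ (pow_ne_zero 2 hσw) (by linear_combination h₀)
  linear_combination hc z + hc_eq * (σ (z + w) * σ (z - w))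

lemma sigma_add_mul_sigma_sub (z w : ℂ) :
    σ (z + w) * σ (z - w) = σ z ^ 2 * hirotaForm σ w - hirotaForm σ z * σ w ^ 2 := by
  have hσ := h.differentiable.continuous
  have hform := (differentiable_hirotaForm h.differentiable).continuous
  have heq : (fun x => σ (z + x / 2) * σ (z - x / 2))
      = fun x => σ z ^ 2 * hirotaForm σ (x / 2) - hirotaForm σ z * σ (x / 2) ^ 2 :=
    eq_of_eqOn_compl_lattice (L := L) (by fun_prop) (by fun_prop) fun x hx =>
      h.sigma_add_mul_sigma_sub_of_two_mul_notMem (by rwa [mul_div_cancel₀ _ two_ne_zero]) z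
  simpa only [mul_div_cancel_left₀ w (two_ne_zero' ℂ)] using congrFun heq (2 * w)

lemma weierstrassP_ne {z w : ℂ} (hz : z ∉ L.lattice) (hw : w ∉ L.lattice)
    (hadd : z + w ∉ L.lattice) (hsub : z - w ∉ L.lattice) :
    L.weierstrassP z ≠ L.weierstrassP w := fun hP => by
  refine mul_ne_zero (h.sigma_ne_zero hadd) (h.sigma_ne_zero hsub) ?_
  rw [h.sigma_add_mul_sigma_sub, h.hirotaForm_eq hz, h.hirotaForm_eq hw, hP]
  ring

end IsSigmaPair

lemma derivWeierstrassP_eq_zero_of_two_mul_mem {L : PeriodPair} {w : ℂ} (hw : 2 * w ∈ L.lattice) :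
    L.derivWeierstrassP w = 0 := by
  have hsub := L.derivWeierstrassP_sub_coe w ⟨2 * w, hw⟩
  rw [show w - 2 * w = -w by ring, L.derivWeierstrassP_neg] at hsub
  exact CharZero.eq_neg_self_iff.mp hsub.symm

lemma eq_neg_four_mul_of_cubic_roots {R : Type*} [CommRing R] [IsDomain R] {p q a b c : R}
    (ha : 4 * a ^ 3 - p * a - q = 0) (hb : 4 * b ^ 3 - p * b - q = 0)
    (hc : 4 * c ^ 3 - p * c - q = 0) (hab : a ≠ b) (hac : a ≠ c) (hbc : b ≠ c) :
    p = -4 * (a * b + a * c + b * c) := by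
  have hp_ab : p = 4 * (a ^ 2 + a * b + b ^ 2) :=
    mul_left_cancel₀ (sub_ne_zero.mpr hab) (by linear_combination hb - ha)
  have hp_ac : p = 4 * (a ^ 2 + a * c + c ^ 2) :=
    mul_left_cancel₀ (sub_ne_zero.mpr hac) (by linear_combination hc - ha)
  have hsum : 4 * (a + b + c) = 0 :=
    mul_left_cancel₀ (sub_ne_zero.mpr hbc) (by linear_combination hp_ac - hp_ab)
  linear_combination hp_ab + (a + b) * hsum

lemma add_div_two_notMem_lattice (L : PeriodPair) : (L.ω₁ + L.ω₂) / 2 ∉ L.lattice := by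
  have hhalf := (L.mul_ω₁_add_mul_ω₂_mem_lattice (α := 1 / 2) (β := 1 / 2)).not.mpr (by norm_num)
  rwa [show (L.ω₁ + L.ω₂) / 2 = ((1 / 2 : ℚ) : ℂ) * L.ω₁ + ((1 / 2 : ℚ) : ℂ) * L.ω₂ by
    push_cast; ring]

lemma IsSigmaPair.g₂_eq {L : PeriodPair} {ζ σ : ℂ → ℂ} (h : IsSigmaPair L ζ σ) :
    L.g₂ = -4 * (L.weierstrassP (L.ω₁ / 2) * L.weierstrassP (L.ω₂ / 2)
      + L.weierstrassP (L.ω₁ / 2) * L.weierstrassP ((L.ω₁ + L.ω₂) / 2)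
      + L.weierstrassP (L.ω₂ / 2) * L.weierstrassP ((L.ω₁ + L.ω₂) / 2)) := by
  have h₁ := L.ω₁_div_two_notMem_lattice
  have h₂ := L.ω₂_div_two_notMem_lattice
  have h₃ := add_div_two_notMem_lattice L
  have hroot {w l : ℂ} (hw : w ∉ L.lattice) (hl : l ∈ L.lattice) (hlw : w = l / 2) :
      4 * L.weierstrassP w ^ 3 - L.g₂ * L.weierstrassP w - L.g₃ = 0 := by
    rw [← L.derivWeierstrassP_sq w hw, hlw,
      derivWeierstrassP_eq_zero_of_two_mul_mem (by rwa [mul_div_cancel₀ _ two_ne_zero]),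
      zero_pow two_ne_zero]
  refine eq_neg_four_mul_of_cubic_roots (hroot h₁ L.ω₁_mem_lattice rfl)
    (hroot h₂ L.ω₂_mem_lattice rfl)
    (hroot h₃ (add_mem L.ω₁_mem_lattice L.ω₂_mem_lattice) rfl)
    (h.weierstrassP_ne h₁ h₂ ?_ ?_) (h.weierstrassP_ne h₁ h₃ ?_ ?_)
    (h.weierstrassP_ne h₂ h₃ ?_ ?_)
  · rwa [← add_div]
  · convert! add_notMem_lattice h₃ (neg_mem L.ω₂_mem_lattice) using 2
    ring
  · convert! add_notMem_lattice h₂ L.ω₁_mem_lattice using 2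
    ring
  · convert! add_notMem_lattice h₂ (neg_mem L.ω₂_mem_lattice) using 2
    ring
  · convert! add_notMem_lattice h₁ L.ω₂_mem_lattice using 2
    ring
  · convert! add_notMem_lattice h₁ (neg_mem L.ω₁_mem_lattice) using 2
    ring

section Fourier

lemma eq_zero_of_tsum_mul_exp_eq_zero {a : ℤ → ℂ} (ha : Summable fun n => ‖a n‖)
    (h : ∀ x : ℝ, ∑' n, a n * cexp (2 * π * I * n * x) = 0) (m : ℤ) : a m = 0 := by
  have hunit (n : ℤ) (x : ℝ) : ‖cexp (2 * π * I * n * x)‖ = 1 := by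
    rw [show 2 * π * I * n * x = ((2 * π * n * x : ℝ) : ℂ) * I by push_cast; ring,
      norm_exp_ofReal_mul_I]
  let term (n : ℤ) : C(ℝ, ℂ) :=
    ⟨fun x => a n * cexp (2 * π * I * n * x) * cexp (2 * π * I * (-m : ℤ) * x), by fun_prop⟩
  have hnorm (n : ℤ) (x : ℝ) : ‖term n x‖ = ‖a n‖ := by
    simp only [term, ContinuousMap.coe_mk, norm_mul, hunit, mul_one]
  have hintegral (n : ℤ) : ∫ x in (0 : ℝ)..1, term n x = if n = m then a m else 0 := by
    have hterm (x : ℝ) : term n x = a n * cexp ((n - m : ℤ) * (2 * π * I) * x) := by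
      simp only [term, ContinuousMap.coe_mk, mul_assoc (a n), ← exp_add]
      congr 2; push_cast; ring
    simp only [hterm, intervalIntegral.integral_const_mul]
    split_ifs with hn
    · simp [hn]
    · have hne : ((n - m : ℤ) : ℂ) * (2 * π * I) ≠ 0 := by simp [sub_eq_zero, hn]
      rw [integral_exp_mul_complex hne, ofReal_one, mul_one, ofReal_zero, mul_zero,
        exp_int_mul_two_pi_mul_I, exp_zero, sub_self, zero_div, mul_zero]
  have hsum := intervalIntegral.hasSum_intervalIntegral_of_summable_norm (a := 0) (b := 1)
    (f := term) <| ha.of_nonneg_of_le (fun _ => norm_nonneg _) fun n =>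
      (ContinuousMap.norm_le _ (norm_nonneg _)).mpr fun x => (hnorm n x).le
  have hzero (x : ℝ) : ∑' n, term n x = 0 := by
    simp only [term, ContinuousMap.coe_mk, tsum_mul_right, h, zero_mul]
  simp only [hintegral, hzero, intervalIntegral.integral_zero] at hsum
  exact (hasSum_ite_eq m (a m)).unique hsum

end Fourier

noncomputable section OddTheta

/-- The terms of the `k`-th `z`-derivative of the odd Jacobi theta function
`∑ (-1)ⁿ exp(πi(n + 1/2)²τ + 2πi(n + 1/2)z)`. The index is `m = 2n + 1`, and the sine
is `(-1)ⁿ` there and `0` at even `m`, which gives access to the bounds for `jacobiTheta₂_term`. -/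
def oddThetaTerm (k : ℕ) (m : ℤ) (z τ : ℂ) : ℂ :=
  sin (m * π / 2) * (m * π * I) ^ k * jacobiTheta₂_term m (z / 2) (τ / 4)

/-- The `k`-th `z`-derivative of the odd Jacobi theta function
`∑ (-1)ⁿ exp(πi(n + 1/2)²τ + 2πi(n + 1/2)z)`. -/
def oddTheta (k : ℕ) (z τ : ℂ) : ℂ := ∑' m : ℤ, oddThetaTerm k m z τ

/-- A summable majorant of the terms of `oddTheta`, uniform for `|Im z| ≤ S` and `T ≤ Im τ`. -/
def oddThetaBound (k : ℕ) (S T : ℝ) (m : ℤ) : ℝ :=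
  π ^ k * ((|m| ^ k : ℝ) * rexp (-π * (T / 4 * m ^ 2 - 2 * (S / 2) * |m|)))

lemma summable_oddThetaBound (k : ℕ) (S : ℝ) {T : ℝ} (hT : 0 < T) :
    Summable (oddThetaBound k S T) :=
  (mod_cast summable_pow_mul_jacobiTheta₂_term_bound (S / 2) (by positivity : 0 < T / 4) k :
    Summable fun m : ℤ =>
      (|m| ^ k : ℝ) * rexp (-π * (T / 4 * m ^ 2 - 2 * (S / 2) * |m|))).mul_left (π ^ k)

lemma norm_oddThetaTerm_le (k : ℕ) {S T : ℝ} (hT : 0 < T) {z τ : ℂ} (hz : |z.im| ≤ S)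
    (hτ : T ≤ τ.im) (m : ℤ) : ‖oddThetaTerm k m z τ‖ ≤ oddThetaBound k S T m := by
  have hsin : ‖sin (m * π / 2)‖ ≤ 1 := by
    rw [show (m * π / 2 : ℂ) = ((m * π / 2 : ℝ) : ℂ) by push_cast; ring, ← ofReal_sin, norm_real]
    exact Real.abs_sin_le_one _
  have hfreq : ‖(m * π * I : ℂ) ^ k‖ = π ^ k * (|m| ^ k : ℝ) := by
    rw [norm_pow, norm_mul, norm_mul, norm_intCast, norm_I, norm_real,
      Real.norm_of_nonneg Real.pi_pos.le, mul_one, mul_pow, mul_comm, Int.cast_abs]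
  have hterm := norm_jacobiTheta₂_term_le (by positivity : 0 < T / 4) (S := S / 2) (z := z / 2)
    (τ := τ / 4) (by rw [div_ofNat_im, abs_div, abs_two]; gcongr)
    (by rw [div_ofNat_im]; gcongr) m
  calc ‖oddThetaTerm k m z τ‖
      ≤ 1 * (π ^ k * (|m| ^ k : ℝ)) * rexp (-π * (T / 4 * m ^ 2 - 2 * (S / 2) * |m|)) := by
        rw [oddThetaTerm, norm_mul, norm_mul, hfreq]
        gcongr
    _ = oddThetaBound k S T m := by rw [oddThetaBound, one_mul, mul_assoc]

lemma summable_oddThetaTerm (k : ℕ) (z : ℂ) {τ : ℂ} (hτ : 0 < τ.im) :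
    Summable fun m => oddThetaTerm k m z τ :=
  (summable_oddThetaBound k |z.im| hτ).of_norm_bounded
    (norm_oddThetaTerm_le k hτ le_rfl le_rfl)

lemma hasDerivAt_oddThetaTerm_fst (k : ℕ) (m : ℤ) (z τ : ℂ) :
    HasDerivAt (fun w => oddThetaTerm k m w τ) (oddThetaTerm (k + 1) m z τ) z := by
  have hexp : HasDerivAt (fun w => 2 * π * I * m * (w / 2) + π * I * m ^ 2 * (τ / 4))
      (m * π * I) z := by
    convert! (((hasDerivAt_id z).div_const 2).const_mul (2 * π * I * m)).add_const
      (π * I * m ^ 2 * (τ / 4)) using 1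
    ring
  convert! hexp.cexp.const_mul (sin (m * π / 2) * (m * π * I) ^ k) using 1
  rw [oddThetaTerm, jacobiTheta₂_term]
  ring

lemma hasDerivAt_oddThetaTerm_snd (k : ℕ) (m : ℤ) (z τ : ℂ) :
    HasDerivAt (fun t => oddThetaTerm k m z t) (oddThetaTerm (k + 2) m z τ / (4 * π * I)) τ := by
  have hexp : HasDerivAt (fun t => 2 * π * I * m * (z / 2) + π * I * m ^ 2 * (t / 4))
      ((m * π * I) ^ 2 / (4 * π * I)) τ := by
    convert! (((hasDerivAt_id τ).div_const 4).const_mul (π * I * m ^ 2)).const_add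
      (2 * π * I * m * (z / 2)) using 1
    field_simp [Real.pi_ne_zero]
  convert! hexp.cexp.const_mul (sin (m * π / 2) * (m * π * I) ^ k) using 1
  rw [oddThetaTerm, jacobiTheta₂_term]
  ring

lemma isPreconnected_im_preimage {s : Set ℝ} (hs : Convex ℝ s) :
    IsPreconnected {z : ℂ | z.im ∈ s} :=
  (hs.linear_preimage imLm).isPreconnected

lemma hasDerivAt_oddTheta_fst (k : ℕ) (z : ℂ) {τ : ℂ} (hτ : 0 < τ.im) :
    HasDerivAt (fun w => oddTheta k w τ) (oddTheta (k + 1) z τ) z := by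
  obtain ⟨S, hS⟩ := exists_gt |z.im|
  exact hasDerivAt_tsum_of_isPreconnected (t := {w : ℂ | w.im ∈ Set.Ioo (-S) S})
    (summable_oddThetaBound (k + 1) S hτ) (isOpen_Ioo.preimage continuous_im)
    (isPreconnected_im_preimage (convex_Ioo _ _))
    (fun m w _ => hasDerivAt_oddThetaTerm_fst k m w τ)
    (fun m w hw => norm_oddThetaTerm_le (k + 1) hτ (abs_lt.mpr hw).le le_rfl m)
    (abs_lt.mp hS) (summable_oddThetaTerm k z hτ) (abs_lt.mp hS)

lemma hasDerivAt_oddTheta_snd (k : ℕ) (z : ℂ) {τ : ℂ} (hτ : 0 < τ.im) :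
    HasDerivAt (fun t => oddTheta k z t) (oddTheta (k + 2) z τ / (4 * π * I)) τ := by
  obtain ⟨T, hT, hTτ⟩ := exists_between hτ
  rw [oddTheta, ← tsum_div_const]
  refine hasDerivAt_tsum_of_isPreconnected (t := {t : ℂ | t.im ∈ Set.Ioi T})
    ((summable_oddThetaBound (k + 2) |z.im| hT).div_const ‖(4 * π * I : ℂ)‖)
    (isOpen_Ioi.preimage continuous_im) (isPreconnected_im_preimage (convex_Ioi _))
    (fun m t _ => hasDerivAt_oddThetaTerm_snd k m z t) (fun m t ht => ?_)
    hTτ (summable_oddThetaTerm k z hτ) hTτ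
  rw [norm_div]
  gcongr
  exact norm_oddThetaTerm_le (k + 2) hT le_rfl (le_of_lt ht) m

lemma differentiable_oddTheta (k : ℕ) {τ : ℂ} (hτ : 0 < τ.im) :
    Differentiable ℂ fun z => oddTheta k z τ :=
  fun z => (hasDerivAt_oddTheta_fst k z hτ).differentiableAt

lemma iteratedDeriv_oddTheta (k n : ℕ) {τ : ℂ} (hτ : 0 < τ.im) :
    iteratedDeriv n (fun z => oddTheta k z τ) = fun z => oddTheta (k + n) z τ := by
  induction n with
  | zero => rw [iteratedDeriv_zero, add_zero]
  | succ n ih =>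
    rw [iteratedDeriv_succ, ih]
    exact funext fun z => (hasDerivAt_oddTheta_fst _ z hτ).deriv

lemma oddTheta_neg (k : ℕ) (z τ : ℂ) :
    oddTheta k (-z) τ = (-1) ^ (k + 1) * oddTheta k z τ := by
  rw [oddTheta, oddTheta, ← tsum_mul_left, ← (Equiv.neg ℤ).tsum_eq]
  refine tsum_congr fun m => ?_
  have hterm : jacobiTheta₂_term (-m) (-z / 2) (τ / 4) = jacobiTheta₂_term m (z / 2) (τ / 4) := by
    rw [jacobiTheta₂_term, jacobiTheta₂_term]
    congr 1; push_cast; ring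
  rw [Equiv.neg_apply, oddThetaTerm, oddThetaTerm, hterm, Int.cast_neg, neg_mul, neg_div, sin_neg,
    neg_mul, neg_pow]
  ring

lemma oddTheta_zero_of_even {k : ℕ} (hk : Even k) (τ : ℂ) : oddTheta k 0 τ = 0 := by
  have h := oddTheta_neg k 0 τ
  rw [neg_zero, pow_succ, hk.neg_one_pow, one_mul, neg_one_mul] at h
  exact CharZero.eq_neg_self_iff.mp h

lemma iteratedDeriv_oddTheta_zero (n : ℕ) {τ : ℂ} (hτ : 0 < τ.im) :
    iteratedDeriv n (fun z => oddTheta 0 z τ) 0 = oddTheta n 0 τ := by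
  rw [iteratedDeriv_oddTheta 0 n hτ, zero_add]

lemma iteratedDeriv_oddTheta_zero_of_even {τ : ℂ} (hτ : 0 < τ.im) (k : ℕ) (hk : Even k) :
    iteratedDeriv k (fun z => oddTheta 0 z τ) 0 = 0 := by
  rw [iteratedDeriv_oddTheta_zero k hτ, oddTheta_zero_of_even hk]

lemma sin_int_mul_pi_div_two_mul_exp (m : ℤ) :
    sin (m * π / 2) * cexp (m * π * I) = -sin (m * π / 2) := by
  set x : ℂ := m * π / 2
  have hdouble : sin x * cos x = 0 := by
    have hsin := sin_int_mul_pi m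
    rw [show (m * π : ℂ) = 2 * x by ring, sin_two_mul] at hsin
    linear_combination hsin / 2
  rw [show (m * π * I : ℂ) = 2 * x * I by ring, exp_mul_I, cos_two_mul', sin_two_mul]
  linear_combination -sin x * sin_sq_add_cos_sq x
    + (2 * cos x + 2 * I * sin x) * hdouble

lemma oddTheta_add_one (z τ : ℂ) : oddTheta 0 (z + 1) τ = -oddTheta 0 z τ := by
  rw [oddTheta, oddTheta, ← tsum_neg]
  refine tsum_congr fun m => ?_
  have hterm : jacobiTheta₂_term m ((z + 1) / 2) (τ / 4)
      = cexp (m * π * I) * jacobiTheta₂_term m (z / 2) (τ / 4) := by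
    rw [jacobiTheta₂_term, jacobiTheta₂_term, ← exp_add]
    congr 1; ring
  rw [oddThetaTerm, oddThetaTerm, hterm]
  linear_combination jacobiTheta₂_term m (z / 2) (τ / 4) * sin_int_mul_pi_div_two_mul_exp m

lemma oddTheta_add_tau (z τ : ℂ) :
    oddTheta 0 (z + τ) τ = -cexp (-(2 * π * I) * (z + τ / 2)) * oddTheta 0 z τ := by
  rw [oddTheta, oddTheta, ← tsum_mul_left]
  conv_rhs => rw [← (Equiv.addRight (2 : ℤ)).tsum_eq]
  refine tsum_congr fun m => ?_
  have hterm : jacobiTheta₂_term m ((z + τ) / 2) (τ / 4)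
      = cexp (-(2 * π * I) * (z + τ / 2)) * jacobiTheta₂_term (m + 2) (z / 2) (τ / 4) := by
    rw [jacobiTheta₂_term, jacobiTheta₂_term, ← exp_add]
    congr 1; push_cast; ring
  have hsin : sin ((m + 2 : ℤ) * π / 2) = -sin (m * π / 2) := by
    rw [← sin_add_pi]
    congr 1; push_cast; ring
  rw [Equiv.coe_addRight, oddThetaTerm, oddThetaTerm, hterm, hsin]
  ring

lemma exists_oddTheta_ne_zero {τ : ℂ} (hτ : 0 < τ.im) : ∃ z, oddTheta 0 z τ ≠ 0 := by
  by_contra! h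
  have hterm (m : ℤ) (x : ℝ) : oddThetaTerm 0 m (2 * x) τ
      = oddThetaTerm 0 m 0 τ * cexp (2 * π * I * m * x) := by
    simp only [oddThetaTerm, jacobiTheta₂_term, mul_assoc, ← exp_add]
    congr 3; ring
  have h1 : oddThetaTerm 0 1 0 τ = 0 := by
    refine eq_zero_of_tsum_mul_exp_eq_zero (summable_oddThetaTerm 0 0 hτ).norm (fun x => ?_) 1
    simp only [← hterm]
    exact h (2 * x)
  simp [oddThetaTerm, jacobiTheta₂_term] at h1

end OddTheta

section StandardPeriodPair

variable {τ : ℂ} (hτ : 0 < τ.im)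

/-- The periods `1` and `τ`, which span the lattice `Λ_τ`. -/
def standardPeriodPair (τ : ℂ) (hτ : 0 < τ.im) : PeriodPair where
  ω₁ := 1
  ω₂ := τ
  indep := by
    refine LinearIndependent.pair_iff.mpr fun s t hst => ?_
    have him := congrArg Complex.im hst
    have hre := congrArg Complex.re hst
    simp only [real_smul, mul_one, add_im, ofReal_im, im_ofReal_mul, zero_add, zero_im,
      mul_eq_zero] at him
    obtain rfl := him.resolve_right hτ.ne'
    simpa using hre

lemma mem_lattice_standardPeriodPair {z : ℂ} :
    z ∈ (standardPeriodPair τ hτ).lattice ↔ InLattice τ z := by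
  simp only [PeriodPair.mem_lattice, InLattice, standardPeriodPair, mul_one, eq_comm]

lemma weierstrassP_standardPeriodPair (z : ℂ) :
    (standardPeriodPair τ hτ).weierstrassP z = wp τ z := by
  set L := standardPeriodPair τ hτ with hL
  have hcoe (x : ℤ × ℤ) : ((L.latticeEquivProd.symm x : L.lattice) : ℂ) = x.1 + x.2 * τ := by
    rw [L.latticeEquiv_symm_apply, hL, standardPeriodPair, mul_one]
  rw [← L.weierstrassPExcept_add 0 z, wp, add_comm, PeriodPair.weierstrassPExcept,
    ← L.latticeEquivProd.symm.toEquiv.tsum_eq]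
  congr 1
  · simp
  · symm
    refine (tsum_subtype {w : ℤ × ℤ | w ≠ 0} fun w => (z - ((w.1 : ℂ) + (w.2 : ℂ) * τ))⁻¹ ^ 2
      - ((w.1 : ℂ) + (w.2 : ℂ) * τ)⁻¹ ^ 2).trans (tsum_congr fun x => ?_)
    by_cases hx : x = 0
    · simp [hx]
    · have hx₀ : ((L.latticeEquivProd.symm x : L.lattice) : ℂ) ≠ 0 := by simpa using hx
      rw [LinearEquiv.coe_toEquiv, ZeroMemClass.coe_zero, if_neg hx₀, hcoe]
      simp [hx]

lemma isSigmaPair_standardPeriodPair {zeta sigma : ℂ → ℂ → ℂ} (hzeta : IsWeierstrassZeta zeta)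
    (hsigma : IsWeierstrassSigma zeta sigma) :
    IsSigmaPair (standardPeriodPair τ hτ) (zeta τ) (sigma τ) where
  hasDerivAt_zeta z hz := by
    rw [weierstrassP_standardPeriodPair]
    exact (hzeta τ hτ).2.1 z ((mem_lattice_standardPeriodPair hτ).not.mp hz)
  odd := (hsigma τ hτ).1
  differentiable := (hsigma τ hτ).2.1
  hasDerivAt z hz := (hsigma τ hτ).2.2.1 z ((mem_lattice_standardPeriodPair hτ).not.mp hz)
  tendsto := (hsigma τ hτ).2.2.2

lemma zeta_add_one_of_isEta1 {zeta : ℂ → ℂ → ℂ} {eta1 : ℂ → ℂ} (heta1 : IsEta1 zeta eta1) {z : ℂ}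
    (hz : z ∉ (standardPeriodPair τ hτ).lattice) : zeta τ (z + 1) = zeta τ z + eta1 τ := by
  rw [heta1 τ hτ z ((mem_lattice_standardPeriodPair hτ).not.mp hz), add_sub_cancel]

lemma g₂_standardPeriodPair {ζ σ : ℂ → ℂ} (h : IsSigmaPair (standardPeriodPair τ hτ) ζ σ) :
    (standardPeriodPair τ hτ).g₂ = g2 τ := by
  rw [h.g₂_eq]
  simp only [weierstrassP_standardPeriodPair]
  rfl

end StandardPeriodPair

section ThetaSigma

variable {τ : ℂ}

lemma norm_cexp_two_pi_mul_add_div_two (k : ℝ) (hτ : τ.im ≠ 0) (z : ℂ) :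
    ‖cexp (2 * π * I * k * (z + τ / 2))‖ * rexp (π * k * (z + τ).im ^ 2 / τ.im)
      = rexp (π * k * z.im ^ 2 / τ.im) := by
  have hre : (2 * π * I * k * (z + τ / 2)).re = -(2 * π * k * (z.im + τ.im / 2)) := by
    rw [show 2 * π * I * k * (z + τ / 2) = ((2 * π * k : ℝ) : ℂ) * (I * (z + τ / 2)) by
      push_cast; ring, re_ofReal_mul, I_mul_re, add_im, div_ofNat_im]
    ring
  rw [norm_exp, ← Real.exp_add, hre, add_im]
  congr 1
  field_simp
  ring

lemma apply_eq_apply_of_norm_add_eq (hτ : 0 < τ.im) {f : ℂ → ℂ} (hf : Differentiable ℂ f)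
    (h₁ : ∀ z, ‖f (z + 1)‖ = ‖f z‖) {k : ℝ} (hk : 0 ≤ k)
    (h₂ : ∀ z, ‖f (z + τ)‖ = ‖cexp (2 * π * I * k * (z + τ / 2))‖ * ‖f z‖) (z w : ℂ) :
    f z = f w := by
  have hcont := hf.continuous
  refine apply_eq_apply_of_norm_le_periodic (L := standardPeriodPair τ hτ)
    (φ := fun z => ‖f z‖ * rexp (π * k * z.im ^ 2 / τ.im)) hf (by fun_prop)
    (fun z => ?_) (fun z => ?_) (fun z => ?_) z w
  · simp only [standardPeriodPair, h₁, add_im, one_im, add_zero]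
  · simp only [standardPeriodPair]
    rw [h₂, mul_comm ‖cexp _‖, mul_assoc, norm_cexp_two_pi_mul_add_div_two k hτ.ne']
  · exact le_mul_of_one_le_right (norm_nonneg _) (Real.one_le_exp (by positivity))

lemma exists_int_mul_eq_of_add_tau {f : ℂ → ℂ} (hf₀ : ∃ z, f z ≠ 0) {c : ℂ}
    (h₁ : ∀ z, f (z + 1) = -f z) (h₂ : ∀ z, f (z + τ) = -(cexp (c * (z + τ / 2)) * f z)) :
    ∃ k : ℤ, c = k * (2 * π * I) := by
  obtain ⟨z₀, hz₀⟩ := hf₀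
  rw [← exp_eq_one_iff]
  have hcomm := h₂ (z₀ + 1)
  rw [add_right_comm, h₁, h₁, h₂,
    show c * (z₀ + 1 + τ / 2) = c * (z₀ + τ / 2) + c by ring, exp_add] at hcomm
  refine mul_left_cancel₀ (mul_ne_zero (exp_ne_zero (c * (z₀ + τ / 2))) hz₀) ?_
  linear_combination -hcomm

lemma exists_nat_eq_of_add_tau (hτ : 0 < τ.im) {f : ℂ → ℂ} (hf : Differentiable ℂ f)
    (hf₀ : ∃ z, f z ≠ f 0) {c : ℂ} (h₁ : ∀ z, f (z + 1) = -f z)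
    (h₂ : ∀ z, f (z + τ) = -(cexp (c * (z + τ / 2)) * f z)) :
    ∃ n : ℕ, c = -(2 * π * I) * (n + 1) := by
  obtain ⟨z₀, hz₀⟩ := hf₀
  have hne : ∃ z, f z ≠ 0 := by
    by_contra! hzero
    exact hz₀ (by rw [hzero, hzero])
  obtain ⟨k, rfl⟩ := exists_int_mul_eq_of_add_tau hne h₁ h₂
  have hk : k < 0 := by
    by_contra! hk
    refine hz₀ (apply_eq_apply_of_norm_add_eq hτ hf (k := k) (fun z => by rw [h₁, norm_neg])
      (by exact_mod_cast hk) (fun z => ?_) z₀ 0)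
    rw [h₂, norm_neg, norm_mul]
    congr 3
    push_cast
    ring
  obtain ⟨n, rfl⟩ := Int.eq_negSucc_of_lt_zero hk
  exact ⟨n, by push_cast [Int.negSucc_eq]; ring⟩

lemma oddTheta_eq_zero_of_mem (hτ : 0 < τ.im) {l : ℂ}
    (hl : l ∈ (standardPeriodPair τ hτ).lattice) : oddTheta 0 l τ = 0 := by
  let periods : AddSubgroup ℂ :=
    { carrier := {l | ∀ z, oddTheta 0 (z + l) τ = 0 ↔ oddTheta 0 z τ = 0}
      zero_mem' := fun z => by rw [add_zero]
      add_mem' := fun {a b} ha hb z => by rw [← add_assoc, hb, ha]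
      neg_mem' := fun {a} ha z => by rw [← ha, neg_add_cancel_right] }
  have hle : (standardPeriodPair τ hτ).lattice ≤ periods.toIntSubmodule := by
    refine Submodule.span_le.mpr (Set.insert_subset ?_ (Set.singleton_subset_iff.mpr ?_))
    · exact fun z => by rw [standardPeriodPair, oddTheta_add_one, neg_eq_zero]
    · exact fun z => by simp [standardPeriodPair, oddTheta_add_tau]
  have hl₀ := hle hl 0
  rw [zero_add] at hl₀
  exact hl₀.mpr (oddTheta_zero_of_even Even.zero τ)

lemma hasDerivAt_mul_cexp_mul_sq_div_two {f : ℂ → ℂ} {f' z : ℂ} (hf : HasDerivAt f f' z)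
    (c : ℂ) : HasDerivAt (fun z => f z * cexp (c * z ^ 2 / 2))
      ((f' + c * z * f z) * cexp (c * z ^ 2 / 2)) z := by
  have hsq : HasDerivAt (fun z : ℂ => c * z ^ 2 / 2) (c * z) z := by
    convert! (((hasDerivAt_id z).fun_pow 2).const_mul c).div_const 2 using 1
    simp only [id]
    ring
  convert! hf.mul hsq.cexp using 1
  ring

end ThetaSigma

namespace IsSigmaPair

lemma analyticOrderAt_sigma_mul_exp_le {L : PeriodPair} {ζ σ : ℂ → ℂ} (h : IsSigmaPair L ζ σ)
    (c : ℂ) {g : ℂ → ℂ} (hg : Differentiable ℂ g) (hzero : ∀ l ∈ L.lattice, g l = 0) (z : ℂ) :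
    analyticOrderAt (fun z => σ z * cexp (c * z ^ 2 / 2)) z ≤ analyticOrderAt g z := by
  have hσ := h.differentiable
  have hs : Differentiable ℂ fun z => σ z * cexp (c * z ^ 2 / 2) := by fun_prop
  have hs_zero (hz : σ z * cexp (c * z ^ 2 / 2) = 0) : σ z = 0 :=
    (mul_eq_zero.mp hz).resolve_right (exp_ne_zero _)
  refine analyticOrderAt_le_of_deriv_ne_zero (hs.analyticAt z) (hg.analyticAt z) (fun hz => ?_)
    fun hz => hzero z (h.sigma_eq_zero_iff.mp (hs_zero hz))
  rw [(hasDerivAt_mul_cexp_mul_sq_div_two (hσ z).hasDerivAt c).deriv, hs_zero hz, mul_zero,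
    add_zero]
  exact mul_ne_zero (h.deriv_ne_zero (hs_zero hz)) (exp_ne_zero _)

variable {τ : ℂ} {hτ : 0 < τ.im} {ζ σ : ℂ → ℂ} {η : ℂ}
  (h : IsSigmaPair (standardPeriodPair τ hτ) ζ σ)
  (hη : ∀ z ∉ (standardPeriodPair τ hτ).lattice, ζ (z + 1) = ζ z + η)
include h hη

lemma sigma_mul_exp_add_one (z : ℂ) :
    σ (z + 1) * cexp (-η * (z + 1) ^ 2 / 2) = -(σ z * cexp (-η * z ^ 2 / 2)) := by
  rw [h.sigma_add (l := 1) (standardPeriodPair τ hτ).ω₁_mem_lattice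
      (standardPeriodPair τ hτ).ω₁_div_two_notMem_lattice hη,
    show -η * z ^ 2 / 2 = η * (z + 1 / 2) + -η * (z + 1) ^ 2 / 2 by ring, exp_add]
  ring

-- Legendre's relation is the case `n = 0`, but `0 ≤ n` is enough for Liouville's theorem.
lemma exists_sigma_mul_exp_add_tau : ∃ n : ℕ, ∀ z, σ (z + τ) * cexp (-η * (z + τ) ^ 2 / 2)
    = -(cexp (-(2 * π * I) * (n + 1) * (z + τ / 2)) * (σ z * cexp (-η * z ^ 2 / 2))) := by
  have hσ := h.differentiable
  have hτ_mem : τ ∈ (standardPeriodPair τ hτ).lattice :=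
    (standardPeriodPair τ hτ).ω₂_mem_lattice
  obtain ⟨η₂, hη₂⟩ := h.exists_zeta_add hτ_mem
  have hadd_tau (z : ℂ) : σ (z + τ) * cexp (-η * (z + τ) ^ 2 / 2)
      = -(cexp ((η₂ - η * τ) * (z + τ / 2)) * (σ z * cexp (-η * z ^ 2 / 2))) := by
    rw [h.sigma_add hτ_mem (standardPeriodPair τ hτ).ω₂_div_two_notMem_lattice hη₂,
      show -η * (z + τ) ^ 2 / 2 = -(η * τ) * (z + τ / 2) + -η * z ^ 2 / 2 by ring, exp_add,
      sub_eq_add_neg, add_mul, exp_add]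
    ring
  obtain ⟨z₀, hz₀⟩ := h.exists_ne_zero
  obtain ⟨n, hn⟩ := exists_nat_eq_of_add_tau hτ (f := fun z => σ z * cexp (-η * z ^ 2 / 2))
    (by fun_prop) ⟨z₀, by simp [h.sigma_zero, hz₀]⟩ (h.sigma_mul_exp_add_one hη) hadd_tau
  exact ⟨n, by simpa only [hn] using hadd_tau⟩

lemma exists_oddTheta_eq_const_mul :
    ∃ c, ∀ z, oddTheta 0 z τ = c * (σ z * cexp (-η * z ^ 2 / 2)) := by
  let s (z : ℂ) : ℂ := σ z * cexp (-η * z ^ 2 / 2)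
  have hσ := h.differentiable
  have hs : Differentiable ℂ s := by fun_prop
  have hθ := differentiable_oddTheta 0 hτ
  have hs₀ : ∃ z, s z ≠ 0 := h.exists_ne_zero.imp fun z hz => mul_ne_zero hz (exp_ne_zero _)
  obtain ⟨f, hf, hfs⟩ := exists_differentiable_eq_mul hθ hs hs₀
    (h.analyticOrderAt_sigma_mul_exp_le (-η) hθ fun l hl => oddTheta_eq_zero_of_mem hτ hl)
  have hs_one (z : ℂ) : s (z + 1) = -s z := h.sigma_mul_exp_add_one hη z
  have hf_one : (fun z => f (z + 1)) = f :=
    eq_of_mul_eq_mul_of_differentiable (by fun_prop) hf hs hs₀ fun z => by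
      have hθ_one := oddTheta_add_one z τ
      rw [hfs, hfs, hs_one] at hθ_one
      linear_combination -hθ_one
  obtain ⟨n, hs_tau : ∀ z, s (z + τ) = -(cexp (-(2 * π * I) * (n + 1) * (z + τ / 2)) * s z)⟩ :=
    h.exists_sigma_mul_exp_add_tau hη
  have hf_tau : (fun z => f (z + τ)) = fun z => cexp (2 * π * I * n * (z + τ / 2)) * f z :=
    eq_of_mul_eq_mul_of_differentiable (by fun_prop) (by fun_prop) hs hs₀ fun z => by
      have hθ_tau := oddTheta_add_tau z τ
      rw [hfs, hfs, hs_tau, show -(2 * π * I) * (z + τ / 2) = 2 * π * I * n * (z + τ / 2)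
        + -(2 * π * I) * (n + 1) * (z + τ / 2) by ring, exp_add] at hθ_tau
      refine mul_left_cancel₀ (exp_ne_zero (-(2 * π * I) * (n + 1) * (z + τ / 2))) ?_
      linear_combination -hθ_tau
  refine ⟨f 0, fun z => ?_⟩
  rw [hfs, apply_eq_apply_of_norm_add_eq hτ hf (fun z => congrArg norm (congrFun hf_one z))
    n.cast_nonneg (fun z => by rw [congrFun hf_tau z, norm_mul, ofReal_natCast]) z 0]

lemma oddTheta_eq (z : ℂ) :
    oddTheta 0 z τ = oddTheta 1 0 τ * (σ z * cexp (-η * z ^ 2 / 2)) := by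
  obtain ⟨c, hc⟩ := h.exists_oddTheta_eq_const_mul hη
  have hderiv := (hasDerivAt_mul_cexp_mul_sq_div_two h.hasDerivAt_zero (-η)).const_mul c
  rw [← funext hc] at hderiv
  have hc_eq : oddTheta 1 0 τ = c := by
    simpa [h.sigma_zero] using (hasDerivAt_oddTheta_fst 0 0 hτ).unique hderiv
  rw [hc_eq, hc]

lemma oddTheta_one_zero_ne_zero : oddTheta 1 0 τ ≠ 0 := fun hzero => by
  obtain ⟨z, hz⟩ := exists_oddTheta_ne_zero hτ
  exact hz (by rw [h.oddTheta_eq hη, hzero, zero_mul])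

lemma oddTheta_one_eq {z : ℂ} (hz : z ∉ (standardPeriodPair τ hτ).lattice) :
    oddTheta 1 z τ = (ζ z - η * z) * oddTheta 0 z τ := by
  have hderiv := (hasDerivAt_mul_cexp_mul_sq_div_two (h.hasDerivAt z hz) (-η)).const_mul
    (oddTheta 1 0 τ)
  rw [← funext (h.oddTheta_eq hη)] at hderiv
  rw [(hasDerivAt_oddTheta_fst 0 z hτ).unique hderiv, h.oddTheta_eq hη]
  ring

lemma oddTheta_two_eq {z : ℂ} (hz : z ∉ (standardPeriodPair τ hτ).lattice) :
    oddTheta 2 z τ = ((ζ z - η * z) ^ 2 - (standardPeriodPair τ hτ).weierstrassP z - η)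
      * oddTheta 0 z τ := by
  have heq : (fun z => oddTheta 1 z τ) =ᶠ[𝓝 z] fun z => (ζ z - η * z) * oddTheta 0 z τ := by
    filter_upwards [(isOpen_compl_lattice _).mem_nhds hz] with w hw
    exact h.oddTheta_one_eq hη hw
  have hderiv := (((h.hasDerivAt_zeta z hz).fun_sub ((hasDerivAt_id z).const_mul η)).fun_mul
    (hasDerivAt_oddTheta_fst 0 z hτ)).congr_of_eventuallyEq heq
  rw [(hasDerivAt_oddTheta_fst 1 z hτ).unique hderiv, h.oddTheta_one_eq hη hz]
  simp only [id]
  ring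

lemma hirotaForm_oddTheta {z : ℂ} (hz : z ∉ (standardPeriodPair τ hτ).lattice) :
    hirotaForm (fun z => oddTheta 0 z τ) z
      = ((standardPeriodPair τ hτ).weierstrassP z + η) * oddTheta 0 z τ ^ 2 := by
  have hderiv (k : ℕ) : deriv (fun z => oddTheta k z τ) = fun z => oddTheta (k + 1) z τ :=
    funext fun z => (hasDerivAt_oddTheta_fst k z hτ).deriv
  simp only [hirotaForm, hderiv, zero_add, one_add_one_eq_two]
  rw [h.oddTheta_one_eq hη hz, h.oddTheta_two_eq hη hz]
  ring

lemma sq_mul_hirotaForm_oddTheta_eventuallyEq :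
    (fun z => z ^ 2 * hirotaForm (fun z => oddTheta 0 z τ) z) =ᶠ[𝓝 0]
      fun z => (1 + z ^ 2 * ((standardPeriodPair τ hτ).weierstrassPExcept 0 z + η))
        * oddTheta 0 z τ ^ 2 := by
  set L := standardPeriodPair τ hτ
  filter_upwards [L.compl_lattice_sdiff_singleton_mem_nhds 0] with z hz
  by_cases hz₀ : z = 0
  · simp [hz₀, oddTheta_zero_of_even Even.zero]
  have hP : L.weierstrassPExcept 0 z = L.weierstrassP z - 1 / z ^ 2 := by
    simpa [sub_eq_add_neg] using L.weierstrassPExcept_def 0 z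
  rw [h.hirotaForm_oddTheta hη fun hzL => hz ⟨hzL, hz₀⟩, hP]
  field_simp
  ring

lemma iteratedDeriv_one_oddTheta_ne_zero : iteratedDeriv 1 (fun z => oddTheta 0 z τ) 0 ≠ 0 := by
  rw [iteratedDeriv_oddTheta_zero 1 hτ]
  exact h.oddTheta_one_zero_ne_zero hη

lemma oddTheta_three_zero : oddTheta 3 0 τ = -3 * η * oddTheta 1 0 τ := by
  have hP := (standardPeriodPair τ hτ).analyticAt_weierstrassPExcept 0
  simpa [iteratedDeriv_oddTheta_zero _ hτ, -iteratedDeriv_one] using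
    iteratedDeriv_three_of_sq_mul_hirotaForm_eventuallyEq
      ((differentiable_oddTheta 0 hτ).analyticAt 0) (iteratedDeriv_oddTheta_zero_of_even hτ)
      (hP.fun_add analyticAt_const) (h.iteratedDeriv_one_oddTheta_ne_zero hη)
      (h.sq_mul_hirotaForm_oddTheta_eventuallyEq hη)

lemma oddTheta_five_zero :
    oddTheta 5 0 τ = (15 * η ^ 2 - (standardPeriodPair τ hτ).g₂ / 2) * oddTheta 1 0 τ := by
  have hP := (standardPeriodPair τ hτ).analyticAt_weierstrassPExcept 0
  have hq_two : iteratedDeriv 2 (fun z => (standardPeriodPair τ hτ).weierstrassPExcept 0 z + η) 0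
      = (standardPeriodPair τ hτ).g₂ / 10 := by
    rw [iteratedDeriv_fun_add hP.contDiffAt contDiffAt_const, iteratedDeriv_const,
      if_neg two_ne_zero, add_zero, iteratedDeriv_two_weierstrassPExcept_zero]
  have hfive := iteratedDeriv_five_of_sq_mul_hirotaForm_eventuallyEq
    ((differentiable_oddTheta 0 hτ).analyticAt 0) (iteratedDeriv_oddTheta_zero_of_even hτ)
    (hP.fun_add analyticAt_const) (h.iteratedDeriv_one_oddTheta_ne_zero hη)
    (h.sq_mul_hirotaForm_oddTheta_eventuallyEq hη)
  rw [hq_two, PeriodPair.weierstrassPExcept_zero, zero_add, iteratedDeriv_oddTheta_zero 5 hτ,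
    iteratedDeriv_oddTheta_zero 1 hτ] at hfive
  rw [hfive]
  ring

end IsSigmaPair

lemma IsSigmaPair.sigma_eq_oddTheta {τ : ℂ} {hτ : 0 < τ.im} {ζ σ : ℂ → ℂ} {η : ℂ}
    (h : IsSigmaPair (standardPeriodPair τ hτ) ζ σ)
    (hη : ∀ z ∉ (standardPeriodPair τ hτ).lattice, ζ (z + 1) = ζ z + η) (z : ℂ) :
    σ z = oddTheta 0 z τ * cexp (-(oddTheta 3 0 τ / oddTheta 1 0 τ) * z ^ 2 / 6)
      / oddTheta 1 0 τ := by
  have h₁ := h.oddTheta_one_zero_ne_zero hη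
  have hη_eq : -(oddTheta 3 0 τ / oddTheta 1 0 τ) * z ^ 2 / 6 = -(-η * z ^ 2 / 2) := by
    rw [h.oddTheta_three_zero hη, mul_div_cancel_right₀ _ h₁]
    ring
  rw [hη_eq, h.oddTheta_eq hη z, eq_div_iff h₁, mul_assoc, mul_assoc, ← exp_add, add_neg_cancel,
    exp_zero, mul_one, mul_comm]

lemma hasDerivAt_oddTheta_mul_cexp_div {τ : ℂ} (hτ : 0 < τ.im) (h₁ : oddTheta 1 0 τ ≠ 0) (z : ℂ) :
    HasDerivAt
      (fun t => oddTheta 0 z t * cexp (-(oddTheta 3 0 t / oddTheta 1 0 t) * z ^ 2 / 6)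
        / oddTheta 1 0 t)
      ((oddTheta 2 z τ - (oddTheta 5 0 τ / oddTheta 1 0 τ
          - (oddTheta 3 0 τ / oddTheta 1 0 τ) ^ 2) * z ^ 2 / 6 * oddTheta 0 z τ
          - oddTheta 3 0 τ / oddTheta 1 0 τ * oddTheta 0 z τ)
        * cexp (-(oddTheta 3 0 τ / oddTheta 1 0 τ) * z ^ 2 / 6) / oddTheta 1 0 τ
        / (4 * π * I)) τ := by
  have hθ (k : ℕ) (z : ℂ) := hasDerivAt_oddTheta_snd k z hτ
  convert! ((hθ 0 z).fun_mul ((((hθ 3 0).fun_div (hθ 1 0) h₁).fun_neg.mul_const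
    (z ^ 2)).div_const 6).cexp).fun_div (hθ 1 0) h₁ using 1
  have hπ := ofReal_ne_zero.mpr Real.pi_ne_zero
  field_simp
  ring

/-- Lemma 2.3 (i): the `τ`-derivative of `log σ(z|τ)`. -/
theorem tau_deriv_log_sigma
    (zeta sigma : ℂ → ℂ → ℂ) (eta1 : ℂ → ℂ)
    (hzeta : IsWeierstrassZeta zeta) (hsigma : IsWeierstrassSigma zeta sigma)
    (heta1 : IsEta1 zeta eta1) :
    ∀ τ : ℂ, 0 < τ.im → ∀ z : ℂ, ¬ InLattice τ z →
    HasDerivAt (fun t => sigma t z)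
      (((Complex.I / (4 * (Real.pi : ℂ))) *
        (wp τ z - (zeta τ z) ^ 2 + 2 * eta1 τ * (z * zeta τ z - 1)
          - (1 / 12) * g2 τ * z ^ 2)) * sigma τ z) τ := by
  intro τ hτ z hz
  have h (t : ℂ) (ht : 0 < t.im) := isSigmaPair_standardPeriodPair ht hzeta hsigma
  have hη (t : ℂ) (ht : 0 < t.im) := fun w => zeta_add_one_of_isEta1 ht heta1 (z := w)
  have hσ (t : ℂ) (ht : 0 < t.im) := (h t ht).sigma_eq_oddTheta (hη t ht) z
  have h₁ := (h τ hτ).oddTheta_one_zero_ne_zero (hη τ hτ)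
  have hz' := (mem_lattice_standardPeriodPair hτ).not.mpr hz
  convert! (hasDerivAt_oddTheta_mul_cexp_div hτ h₁ z).congr_of_eventuallyEq
    ((isOpen_lt continuous_const continuous_im).eventually_mem hτ |>.mono hσ) using 1
  rw [hσ τ hτ, (h τ hτ).oddTheta_two_eq (hη τ hτ) hz', (h τ hτ).oddTheta_five_zero (hη τ hτ),
    (h τ hτ).oddTheta_three_zero (hη τ hτ), g₂_standardPeriodPair hτ (h τ hτ),
    weierstrassP_standardPeriodPair, mul_div_cancel_right₀ _ h₁, mul_div_cancel_right₀ _ h₁]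
  have hI : I / (4 * π) = -1 / (4 * π * I) := by
    have hπ := ofReal_ne_zero.mpr Real.pi_ne_zero
    field_simp
    exact I_sq
  rw [hI]
  ring
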